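/- arXiv:2006.14507 — 8 statements merged into one kernel-verified Lean document; each statement's English description precedes it below -/
import Mathlib

section
/- Let Y be a smooth Killing field of Euclidean 3-space and let X be any smooth vector field on Euclidean 3-space. Then div Y vanishes identically, and for every point x one has grad h x = (Y x) × ((curl X) x) + [Y, X] x, where h is the scalar function h y = ⟪X y, Y y⟫. -/
open scoped RealInnerProductSpace

noncomputable section

/-- Euclidean 3-space. -/
abbrev E3 := EuclideanSpace ℝ (Fin 3)

/-- The standard basis vectors e₁, e₂, e₃ (indexed by 0, 1, 2). -/
def e3 (i : Fin 3) : E3 := EuclideanSpace.single i (1 : ℝ)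

/-- Build a point of `E3` from three coordinates. -/
def mk3 (a b c : ℝ) : E3 := (WithLp.equiv 2 (Fin 3 → ℝ)).symm ![a, b, c]

/-- The curl of a vector field:
`(curl X) x = (∂₂X₃ − ∂₃X₂, ∂₃X₁ − ∂₁X₃, ∂₁X₂ − ∂₂X₁)(x)`. -/
def curl3 (X : E3 → E3) (x : E3) : E3 :=
  mk3 (fderiv ℝ X x (e3 1) 2 - fderiv ℝ X x (e3 2) 1)
      (fderiv ℝ X x (e3 2) 0 - fderiv ℝ X x (e3 0) 2)
      (fderiv ℝ X x (e3 0) 1 - fderiv ℝ X x (e3 1) 0)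

/-- The cross product on `E3`. -/
def cross3 (a b : E3) : E3 :=
  mk3 (a 1 * b 2 - a 2 * b 1) (a 2 * b 0 - a 0 * b 2) (a 0 * b 1 - a 1 * b 0)

/-- A vector field is a Killing field iff its derivative is everywhere skew-adjoint. -/
def IsKilling3 (Y : E3 → E3) : Prop :=
  ∀ x v w : E3, ⟪fderiv ℝ Y x v, w⟫ + ⟪v, fderiv ℝ Y x w⟫ = 0
/-- A smooth Killing field `Y` of Euclidean 3-space is divergence-free,
and for every smooth vector field `X`, with `h y = ⟪X y, Y y⟫`, one has
`grad h x = (Y x) × ((curl X) x) + [Y, X] x`. -/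
theorem killing_div_free_and_grad_identity (Y X : E3 → E3)
    (hY : ContDiff ℝ (⊤ : ℕ∞) Y) (hX : ContDiff ℝ (⊤ : ℕ∞) X) (hK : IsKilling3 Y) :
    (∀ x : E3, ∑ i, ⟪fderiv ℝ Y x (e3 i), e3 i⟫ = 0) ∧
    (∀ x : E3, gradient (fun y => ⟪X y, Y y⟫) x
        = cross3 (Y x) (curl3 X x) + (fderiv ℝ X x (Y x) - fderiv ℝ Y x (X x))) := by
  refine ⟨fun x => Finset.sum_eq_zero fun i _ => ?_, fun x => ?_⟩
  · have h := hK x (e3 i) (e3 i)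
    rw [real_inner_comm (fderiv ℝ Y x (e3 i)) (e3 i)] at h
    linarith
  · have dX : DifferentiableAt ℝ X x := (hX.differentiable (by simp)) x
    have dY : DifferentiableAt ℝ Y x := (hY.differentiable (by simp)) x
    have hdec : ∀ v : E3, v = v 0 • e3 0 + v 1 • e3 1 + v 2 • e3 2 := by
      intro v
      ext i
      fin_cases i <;> simp [e3]
    apply ext_inner_right ℝ
    intro v
    have h1 : ⟪gradient (fun y => ⟪X y, Y y⟫) x, v⟫
        = ⟪X x, fderiv ℝ Y x v⟫ + ⟪fderiv ℝ X x v, Y x⟫ := by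
      rw [gradient, InnerProductSpace.toDual_symm_apply, fderiv_inner_apply ℝ dX dY]
    have h2 := hK x (X x) v
    have hv : fderiv ℝ X x v = v 0 • fderiv ℝ X x (e3 0) + v 1 • fderiv ℝ X x (e3 1)
        + v 2 • fderiv ℝ X x (e3 2) := by
      conv_lhs => rw [hdec v]
      simp only [map_add, map_smul]
    have hYv : fderiv ℝ X x (Y x) = Y x 0 • fderiv ℝ X x (e3 0)
        + Y x 1 • fderiv ℝ X x (e3 1) + Y x 2 • fderiv ℝ X x (e3 2) := by
      conv_lhs => rw [hdec (Y x)]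
      simp only [map_add, map_smul]
    have h3 : ⟪fderiv ℝ X x v, Y x⟫
        = ⟪cross3 (Y x) (curl3 X x), v⟫ + ⟪fderiv ℝ X x (Y x), v⟫ := by
      rw [hv, hYv]
      simp [PiLp.inner_apply, Fin.sum_univ_three, cross3, curl3, mk3]
      ring
    rw [h1, inner_add_left, inner_sub_left]
    linarith
end
end

section
/- Let Y be a smooth Killing field of Euclidean 3-space and suppose there exists κ ∈ ℝ such that (curl Y) x = κ • Y x for every x (in particular this covers the irrotational case κ = 0 and the Beltrami case κ ≠ 0). Then the gradient of the scalar function q y = ⟪Y y, Y y⟫ vanishes identically, and fderiv ℝ Y x (Y x) = 0 for every x, i.e. all integral curves of Y are straight lines traversed at constant speed. -/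
open scoped RealInnerProductSpace

noncomputable section

/-- If a smooth Killing field `Y` of Euclidean 3-space satisfies
`curl Y = κ • Y` for some `κ ∈ ℝ` (covering the irrotational and Beltrami cases),
then `grad ⟪Y, Y⟫` vanishes identically and `fderiv ℝ Y x (Y x) = 0` everywhere,
i.e. all integral curves of `Y` are straight lines traversed at constant speed. -/
theorem killing_proportional_curl_geodesic (Y : E3 → E3)
    (hY : ContDiff ℝ (⊤ : ℕ∞) Y) (hK : IsKilling3 Y)
    (κ : ℝ) (hκ : ∀ x : E3, curl3 Y x = κ • Y x) :
    (∀ x : E3, gradient (fun y => ⟪Y y, Y y⟫) x = 0) ∧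
    (∀ x : E3, fderiv ℝ Y x (Y x) = 0) := by
  have key : ∀ x : E3, fderiv ℝ Y x (Y x) = 0 := by
    intro x
    have hs : ∀ i j : Fin 3, fderiv ℝ Y x (e3 i) j + fderiv ℝ Y x (e3 j) i = 0 := by
      intro i j
      have h := hK x (e3 i) (e3 j)
      simpa [e3, EuclideanSpace.inner_single_left, EuclideanSpace.inner_single_right] using h
    have hdec : Y x = Y x 0 • e3 0 + Y x 1 • e3 1 + Y x 2 • e3 2 := by
      ext i
      fin_cases i <;> simp [e3]
    have c0 := congrArg (fun v : E3 => v 0) (hκ x)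
    have c1 := congrArg (fun v : E3 => v 1) (hκ x)
    have c2 := congrArg (fun v : E3 => v 2) (hκ x)
    simp [curl3, mk3] at c0 c1 c2
    have hL : fderiv ℝ Y x (Y x) = Y x 0 • fderiv ℝ Y x (e3 0) + Y x 1 • fderiv ℝ Y x (e3 1)
        + Y x 2 • fderiv ℝ Y x (e3 2) := by
      conv_lhs => rw [hdec]
      simp only [map_add, map_smul]
    have h00 : fderiv ℝ Y x (e3 0) 0 = 0 := by linarith [hs 0 0]
    have h11 : fderiv ℝ Y x (e3 1) 1 = 0 := by linarith [hs 1 1]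
    have h22 : fderiv ℝ Y x (e3 2) 2 = 0 := by linarith [hs 2 2]
    have h12 : fderiv ℝ Y x (e3 1) 2 = κ * Y x 0 / 2 := by linarith [hs 1 2]
    have h21 : fderiv ℝ Y x (e3 2) 1 = -(κ * Y x 0 / 2) := by linarith [hs 1 2]
    have h20 : fderiv ℝ Y x (e3 2) 0 = κ * Y x 1 / 2 := by linarith [hs 0 2]
    have h02 : fderiv ℝ Y x (e3 0) 2 = -(κ * Y x 1 / 2) := by linarith [hs 0 2]
    have h01 : fderiv ℝ Y x (e3 0) 1 = κ * Y x 2 / 2 := by linarith [hs 0 1]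
    have h10 : fderiv ℝ Y x (e3 1) 0 = -(κ * Y x 2 / 2) := by linarith [hs 0 1]
    rw [hL]
    ext i
    fin_cases i
    · simp [h00, h10, h20]; ring
    · simp [h01, h11, h21]; ring
    · simp [h02, h12, h22]; ring
  refine ⟨fun x => ?_, key⟩
  have hd : DifferentiableAt ℝ Y x := (hY.differentiable (by simp)) x
  have hz : fderiv ℝ (fun y => ⟪Y y, Y y⟫) x = 0 := by
    ext v
    rw [fderiv_inner_apply ℝ hd hd]
    have h := hK x v (Y x)
    rw [key x, inner_zero_right, add_zero] at h
    rw [real_inner_comm, h]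
    simp
  rw [gradient, hz, map_zero]
end
end

section
/- Let Y be a smooth Killing field of Euclidean 3-space, let λ ∈ ℝ, and let X be a smooth vector field with (curl X) x = λ • X x for all x and [Y, X] x = 0 for all x. Then for every x one has grad h x = λ • ((Y x) × (X x)), where h is the scalar function h y = ⟪X y, Y y⟫. -/
open scoped RealInnerProductSpace

noncomputable section

/-- Expansion of a vector in the standard basis. -/
lemma e3_expand (v : E3) : v = v 0 • e3 0 + v 1 • e3 1 + v 2 • e3 2 := by
  ext i
  fin_cases i <;> simp [e3]

/-- The skew part of a linear map is given by its curl. -/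
lemma skew_identity (A : E3 →L[ℝ] E3) (v w : E3) :
    ⟪A v, w⟫ - ⟪A w, v⟫ =
      (A (e3 1) 2 - A (e3 2) 1) * (v 1 * w 2 - v 2 * w 1) +
      (A (e3 2) 0 - A (e3 0) 2) * (v 2 * w 0 - v 0 * w 2) +
      (A (e3 0) 1 - A (e3 1) 0) * (v 0 * w 1 - v 1 * w 0) := by
  have hv : A v = v 0 • A (e3 0) + v 1 • A (e3 1) + v 2 • A (e3 2) := by
    conv_lhs => rw [e3_expand v]
    simp only [map_add, map_smul]
  have hw : A w = w 0 • A (e3 0) + w 1 • A (e3 1) + w 2 • A (e3 2) := by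
    conv_lhs => rw [e3_expand w]
    simp only [map_add, map_smul]
  rw [hv, hw]
  simp only [PiLp.inner_apply, Fin.sum_univ_three, PiLp.add_apply, PiLp.smul_apply,
    smul_eq_mul, RCLike.inner_apply, conj_trivial]
  ring

/-- If `Y` is a smooth Killing field of Euclidean 3-space and `X` is a
smooth vector field with `curl X = λ • X` and `[Y, X] ≡ 0`, then with `h y = ⟪X y, Y y⟫`
one has `grad h x = λ • ((Y x) × (X x))` for every `x`. -/
theorem grad_inner_eq_smul_cross (Y : E3 → E3) (lam : ℝ) (X : E3 → E3)
    (hY : ContDiff ℝ (⊤ : ℕ∞) Y) (hX : ContDiff ℝ (⊤ : ℕ∞) X) (hK : IsKilling3 Y)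
    (hBel : ∀ x : E3, curl3 X x = lam • X x)
    (hcomm : ∀ x : E3, fderiv ℝ X x (Y x) - fderiv ℝ Y x (X x) = 0) :
    ∀ x : E3, gradient (fun y => ⟪X y, Y y⟫) x = lam • cross3 (Y x) (X x) := by
  intro x
  have dX : DifferentiableAt ℝ X x := (hX.differentiable (by simp)) x
  have dY : DifferentiableAt ℝ Y x := (hY.differentiable (by simp)) x
  refine ext_inner_right ℝ fun v => ?_
  rw [gradient, InnerProductSpace.toDual_symm_apply, fderiv_inner_apply ℝ dX dY]
  have h1 := hK x v (X x)
  rw [← sub_eq_zero.mp (hcomm x), real_inner_comm] at h1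
  have h2 := skew_identity (fderiv ℝ X x) v (Y x)
  have hc := hBel x
  have c0 := congrArg (fun u : E3 => u 0) hc
  have c1 := congrArg (fun u : E3 => u 1) hc
  have c2 := congrArg (fun u : E3 => u 2) hc
  simp [curl3, mk3] at c0 c1 c2
  rw [c0, c1, c2] at h2
  have h3 : ⟪lam • cross3 (Y x) (X x), v⟫ =
      lam * X x 0 * (v 1 * Y x 2 - v 2 * Y x 1) +
      lam * X x 1 * (v 2 * Y x 0 - v 0 * Y x 2) +
      lam * X x 2 * (v 0 * Y x 1 - v 1 * Y x 0) := by
    simp [cross3, mk3, PiLp.inner_apply, Fin.sum_univ_three]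
    ring
  rw [h3, ← h2]
  have h4 := real_inner_comm v (fderiv ℝ X x (Y x))
  linarith
end
end

section
/- Every smooth Killing field Y of Euclidean 3-space commutes with its own curl: for every x one has fderiv ℝ (curl Y) x (Y x) − fderiv ℝ Y x ((curl Y) x) = 0, i.e. [Y, curl Y] ≡ 0. -/
open scoped RealInnerProductSpace

noncomputable section

/-- The second derivative of a Killing field vanishes, so its derivative is constant. -/
theorem killing_fderiv_const (Y : E3 → E3)
    (hY : ContDiff ℝ (⊤ : ℕ∞) Y) (hK : IsKilling3 Y) (x y : E3) :
    fderiv ℝ Y x = fderiv ℝ Y y := by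
  have hd : Differentiable ℝ (fderiv ℝ Y) :=
    (hY.fderiv_right (m := 1) (by norm_cast)).differentiable (by norm_num)
  refine is_const_of_fderiv_eq_zero (𝕜 := ℝ) hd (fun z => ?_) x y
  have hsymm : ∀ u v, fderiv ℝ (fderiv ℝ Y) z u v = fderiv ℝ (fderiv ℝ Y) z v u := by
    intro u v
    have h : IsSymmSndFDerivAt ℝ Y z :=
      hY.contDiffAt.isSymmSndFDerivAt (by simp; exact WithTop.coe_le_coe.2 (le_top : (2 : ℕ∞) ≤ ⊤))
    exact h u v
  have hskew : ∀ u v w, ⟪fderiv ℝ (fderiv ℝ Y) z u v, w⟫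
      = - ⟪fderiv ℝ (fderiv ℝ Y) z u w, v⟫ := by
    intro u v w
    have h1 : ∀ v : E3, HasFDerivAt (fun t => fderiv ℝ Y t v)
        ((fderiv ℝ (fderiv ℝ Y) z).flip v) z := fun v => by
      have := (hd z).hasFDerivAt.clm_apply (hasFDerivAt_const v z)
      simpa using this
    have h2 := ((h1 v).inner ℝ (hasFDerivAt_const w z)).add
      ((hasFDerivAt_const v z).inner ℝ (h1 w))
    have h3 := h2.unique ((hasFDerivAt_const (0 : ℝ) z).congr_of_eventuallyEq
      (Filter.Eventually.of_forall fun t => hK t v w))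
    have h4 := DFunLike.congr_fun h3 u
    simp at h4
    rw [real_inner_comm v]
    linarith
  ext1 u
  ext1 v
  refine ext_inner_right ℝ fun w => ?_
  simp only [_root_.zero_apply, inner_zero_left]
  have a1 := hskew u v w
  have a2 := hskew w u v
  have a3 := hskew v w u
  rw [hsymm u w] at a1
  rw [hsymm w v] at a2
  rw [hsymm v u] at a3
  linarith

/-- Every smooth Killing field `Y` of Euclidean 3-space commutes with its
own curl: `[Y, curl Y] ≡ 0`. -/
theorem killing_commutes_with_curl (Y : E3 → E3)
    (hY : ContDiff ℝ (⊤ : ℕ∞) Y) (hK : IsKilling3 Y) :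
    ∀ x : E3, fderiv ℝ (curl3 Y) x (Y x) - fderiv ℝ Y x (curl3 Y x) = 0 := by
  intro x
  have hc : curl3 Y = fun _ => curl3 Y x := by
    funext y
    simp only [curl3, killing_fderiv_const Y hY hK y x]
  have h0 : fderiv ℝ (curl3 Y) x = 0 := by
    rw [hc]; simp
  rw [h0]
  have hs : ∀ i j : Fin 3, fderiv ℝ Y x (e3 i) j = - fderiv ℝ Y x (e3 j) i := by
    intro i j
    have h := hK x (e3 i) (e3 j)
    simp only [e3, EuclideanSpace.inner_single_left, EuclideanSpace.inner_single_right] at h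
    simp at h
    simp only [e3]
    linarith
  have hdec : curl3 Y x = (curl3 Y x 0) • e3 0 + (curl3 Y x 1) • e3 1
      + (curl3 Y x 2) • e3 2 := by
    ext i
    fin_cases i <;> simp [e3]
  have c0 : curl3 Y x 0 = fderiv ℝ Y x (e3 1) 2 - fderiv ℝ Y x (e3 2) 1 := rfl
  have c1 : curl3 Y x 1 = fderiv ℝ Y x (e3 2) 0 - fderiv ℝ Y x (e3 0) 2 := rfl
  have c2 : curl3 Y x 2 = fderiv ℝ Y x (e3 0) 1 - fderiv ℝ Y x (e3 1) 0 := rfl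
  rw [hdec, c0, c1, c2, hs 2 1, hs 0 2, hs 1 0]
  have d0 := hs 0 0
  have d1 := hs 1 1
  have d2 := hs 2 2
  have k0 : fderiv ℝ Y x (e3 0) 0 = 0 := by linarith
  have k1 : fderiv ℝ Y x (e3 1) 1 = 0 := by linarith
  have k2 : fderiv ℝ Y x (e3 2) 2 = 0 := by linarith
  ext i
  fin_cases i <;> simp [k0, k1, k2, hs 2 1, hs 0 2, hs 1 0] <;> ring
end
end

section
/- Let Y be a smooth Killing field of Euclidean 3-space, let λ ∈ ℝ, and let X be a smooth vector field with (curl X) x = λ • X x for all x and [Y, X] x = 0 for all x. Then both X and Y are tangent to the level sets of the function h y = ⟪X y, Y y⟫: for every x one has fderiv ℝ h x (X x) = 0 and fderiv ℝ h x (Y x) = 0. -/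
open scoped RealInnerProductSpace

noncomputable section

/-- A Beltrami field `X` has derivative `A` with `⟪A X, w⟫ = ⟪A w, X⟫`. -/
theorem beltrami_symm (X : E3 → E3) (lam : ℝ) (x w : E3)
    (h : curl3 X x = lam • X x) :
    ⟪fderiv ℝ X x (X x), w⟫ = ⟪fderiv ℝ X x w, X x⟫ := by
  have dec : ∀ v : E3, v = v 0 • e3 0 + v 1 • e3 1 + v 2 • e3 2 := by
    intro v
    ext i
    fin_cases i <;> simp [e3]
  have h0 := congrArg (fun v : E3 => v 0) h
  have h1 := congrArg (fun v : E3 => v 1) h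
  have h2 := congrArg (fun v : E3 => v 2) h
  simp [curl3, mk3] at h0 h1 h2
  have key : ∀ v : E3, fderiv ℝ X x v = v 0 • fderiv ℝ X x (e3 0)
      + v 1 • fderiv ℝ X x (e3 1) + v 2 • fderiv ℝ X x (e3 2) := by
    intro v
    conv_lhs => rw [dec v]
    simp only [map_add, map_smul]
  rw [key (X x), key w]
  simp only [PiLp.inner_apply, Fin.sum_univ_three, PiLp.add_apply, PiLp.smul_apply,
    smul_eq_mul, RCLike.inner_apply, conj_trivial]
  linear_combination (X x 1 * w 2 - X x 2 * w 1) * h0 + (X x 2 * w 0 - X x 0 * w 2) * h1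
    + (X x 0 * w 1 - X x 1 * w 0) * h2

/-- If `Y` is a smooth Killing field of Euclidean 3-space and `X` is a
smooth vector field with `curl X = λ • X` and `[Y, X] ≡ 0`, then both `X` and `Y` are
tangent to the level sets of `h y = ⟪X y, Y y⟫`. -/
theorem tangent_to_level_sets (Y : E3 → E3) (lam : ℝ) (X : E3 → E3)
    (hY : ContDiff ℝ (⊤ : ℕ∞) Y) (hX : ContDiff ℝ (⊤ : ℕ∞) X) (hK : IsKilling3 Y)
    (hBel : ∀ x : E3, curl3 X x = lam • X x)
    (hcomm : ∀ x : E3, fderiv ℝ X x (Y x) - fderiv ℝ Y x (X x) = 0) :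
    ∀ x : E3, fderiv ℝ (fun y => ⟪X y, Y y⟫) x (X x) = 0 ∧
      fderiv ℝ (fun y => ⟪X y, Y y⟫) x (Y x) = 0 := by
  intro x
  have dX : DifferentiableAt ℝ X x := hX.differentiable (by simp) x
  have dY : DifferentiableAt ℝ Y x := hY.differentiable (by simp) x
  have hc := sub_eq_zero.mp (hcomm x)
  rw [fderiv_inner_apply ℝ dX dY, fderiv_inner_apply ℝ dX dY]
  constructor
  · have h1 := hK x (X x) (X x)
    have h2 := real_inner_comm (X x) (fderiv ℝ Y x (X x))
    rw [beltrami_symm X lam x (Y x) (hBel x), hc]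
    linarith
  · have h1 := hK x (X x) (Y x)
    rw [hc]
    linarith
end
end

section
/- Let Ω ⊆ Euclidean 3-space be a nonempty open connected set, let Y be the rotation field Y (x₁,x₂,x₃) = (−x₂, x₁, 0), let λ ≠ 0, and let X be a vector field that is real analytic on Ω, satisfies (curl X) x = λ • X x for all x ∈ Ω, and does not vanish identically on Ω. Then X cannot be everywhere collinear with Y: there exists p ∈ Ω with (Y p) × (X p) ≠ 0. -/
open scoped RealInnerProductSpace

noncomputable section

/-- The rotation field `Y (x₁,x₂,x₃) = (−x₂, x₁, 0)`. -/
def Yrot : E3 → E3 := fun x => mk3 (-(x 1)) (x 0) 0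

/-- On a nonempty open connected set `Ω`, a real analytic Beltrami field
(with eigenvalue `λ ≠ 0`) that does not vanish identically cannot be everywhere collinear
with the rotation field `Y (x₁,x₂,x₃) = (−x₂, x₁, 0)`. -/
theorem beltrami_not_collinear_with_rotation (Ω : Set E3)
    (hΩopen : IsOpen Ω) (hΩne : Ω.Nonempty) (hΩconn : IsConnected Ω)
    (lam : ℝ) (hlam : lam ≠ 0) (X : E3 → E3)
    (hXan : AnalyticOnNhd ℝ X Ω)
    (hBel : ∀ x ∈ Ω, curl3 X x = lam • X x)
    (hXne : ∃ x ∈ Ω, X x ≠ 0) :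
    ∃ p ∈ Ω, cross3 (Yrot p) (X p) ≠ 0 := by
  by_contra hcon
  push Not at hcon
  have hcomp : ∀ p ∈ Ω, p 0 * X p 2 = 0 ∧ (p 0 * X p 0 + p 1 * X p 1 = 0) := by
    intro p hp
    have h := hcon p hp
    have h0 := congrArg (fun v : E3 => v 0) h
    have h2 := congrArg (fun v : E3 => v 2) h
    simp [cross3, Yrot, mk3] at h0 h2
    constructor
    · simpa using h0
    · linarith
  -- find a point off the axis
  obtain ⟨q, hqΩ, hq0, hXq⟩ : ∃ q ∈ Ω, q 0 ≠ 0 ∧ X q ≠ 0 := by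
    obtain ⟨p, hp, hXp⟩ := hXne
    by_cases hp0 : p 0 = 0
    · have hc : ContinuousAt X p := (hXan p hp).continuousAt
      have hev : ∀ᶠ q in nhds p, q ∈ Ω ∧ X q ≠ 0 :=
        (hΩopen.eventually_mem hp).and (hc.eventually_ne hXp)
      have hl : Filter.Tendsto (fun t : ℝ => p + t • e3 0) (nhdsWithin 0 {0}ᶜ) (nhds p) := by
        have : Continuous (fun t : ℝ => p + t • e3 0) := by fun_prop
        have h := this.tendsto 0
        simp only [zero_smul, add_zero] at h
        exact h.mono_left nhdsWithin_le_nhds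
      obtain ⟨t, ⟨h1, h2⟩, ht⟩ := ((hl.eventually hev).and self_mem_nhdsWithin).exists
      refine ⟨_, h1, ?_, h2⟩
      have ht' : t ≠ 0 := ht
      simpa [e3, hp0] using ht'
    · exact ⟨p, hp, hp0, hXp⟩
  have hd : HasFDerivAt X (fderiv ℝ X q) q := (hXan q hqΩ).differentiableAt.hasFDerivAt
  have hcd : ∀ i : Fin 3, HasFDerivAt (fun x => X x i)
      ((EuclideanSpace.proj i : E3 →L[ℝ] ℝ).comp (fderiv ℝ X q)) q := fun i =>
    (EuclideanSpace.proj i : E3 →L[ℝ] ℝ).hasFDerivAt.comp q hd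
  have hpd : ∀ i : Fin 3, HasFDerivAt (fun x : E3 => x i) (EuclideanSpace.proj i : E3 →L[ℝ] ℝ) q :=
    fun i => (EuclideanSpace.proj i : E3 →L[ℝ] ℝ).hasFDerivAt
  have hev0 : ∀ᶠ x : E3 in nhds q, x 0 ≠ 0 :=
    (hpd 0).continuousAt.eventually_ne hq0
  have hevΩ : ∀ᶠ x in nhds q, x ∈ Ω := hΩopen.mem_nhds hqΩ
  have hz2 : (fun x => X x 2) =ᶠ[nhds q] fun _ => (0 : ℝ) := by
    filter_upwards [hev0, hevΩ] with x hx hxΩ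
    exact (mul_eq_zero.mp (hcomp x hxΩ).1).resolve_left hx
  have hD2 : (EuclideanSpace.proj 2 : E3 →L[ℝ] ℝ).comp (fderiv ℝ X q) = 0 :=
    (hcd 2).unique ((hasFDerivAt_const (0 : ℝ) q).congr_of_eventuallyEq hz2)
  have hzs : (fun x => x 0 * X x 0 + x 1 * X x 1) =ᶠ[nhds q] fun _ => (0 : ℝ) := by
    filter_upwards [hevΩ] with x hxΩ
    exact (hcomp x hxΩ).2
  have hDs := (((hpd 0).mul (hcd 0)).add ((hpd 1).mul (hcd 1))).unique
    ((hasFDerivAt_const (0 : ℝ) q).congr_of_eventuallyEq hzs)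
  have hs := DFunLike.congr_fun hDs (e3 2)
  have h20 := DFunLike.congr_fun hD2 (e3 0)
  have h21 := DFunLike.congr_fun hD2 (e3 1)
  have hB := hBel q hqΩ
  have hB0 := congrArg (fun v : E3 => v 0) hB
  have hB1 := congrArg (fun v : E3 => v 1) hB
  have hX2 : X q 2 = 0 := hz2.self_of_nhds
  have hX01 := (hcomp q hqΩ).2
  simp [curl3, mk3] at hB0 hB1
  simp at h20 h21
  simp [e3] at hs
  simp only [e3] at hB0 hB1 h20 h21
  have hlin : lam * (q 0 * X q 1 - q 1 * X q 0) = 0 := by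
    linear_combination hs - q 0 * hB1 + q 1 * hB0 - q 0 * h20 - q 1 * h21
  have hlin' := (mul_eq_zero.mp hlin).resolve_left hlam
  have hr : (q 0 ^ 2 + q 1 ^ 2) ≠ 0 := by positivity
  have hX0 : X q 0 = 0 := by
    apply (mul_eq_zero.mp (?_ : (q 0 ^ 2 + q 1 ^ 2) * X q 0 = 0)).resolve_left hr
    linear_combination q 0 * hX01 - q 1 * hlin'
  have hX1 : X q 1 = 0 := by
    apply (mul_eq_zero.mp (?_ : (q 0 ^ 2 + q 1 ^ 2) * X q 1 = 0)).resolve_left hr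
    linear_combination q 1 * hX01 + q 0 * hlin'
  apply hXq
  ext i
  fin_cases i
  · simpa using hX0
  · simpa using hX1
  · simpa using hX2
end
end

section
/- The line in direction (1, √2, √6) projects to a dense orbit on the 3-torus: the range of the map t ↦ ((t : AddCircle 1), (√2·t : AddCircle 1), (√6·t : AddCircle 1)), t ∈ ℝ, is dense in (AddCircle 1) × (AddCircle 1) × (AddCircle 1). -/
open MeasureTheory UnitAddTorus

lemma indep_aux (a b c : ℤ) (h : (a : ℝ) + b * √2 + c * √6 = 0) : a = 0 ∧ b = 0 ∧ c = 0 := by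
  have h2 : √2 * √2 = (2 : ℝ) := Real.mul_self_sqrt (by norm_num)
  have h3 : √3 * √3 = (3 : ℝ) := Real.mul_self_sqrt (by norm_num)
  have h6 : √6 = √2 * √3 := by
    rw [← Real.sqrt_mul (by norm_num)]; norm_num
  have i2 : Irrational √2 := irrational_sqrt_two
  have i3 : Irrational √3 := by
    have := Nat.Prime.irrational_sqrt (p := 3) (by norm_num)
    simpa using this
  have i6 : Irrational √6 := by
    have := irrational_sqrt_natCast_iff (n := 6)
    have h : ¬ IsSquare (6 : ℕ) := by
      rintro ⟨r, hr⟩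
      have : r ≤ 2 := by nlinarith
      interval_cases r <;> omega
    simpa using this.2 h
  have key : ∀ (x : ℝ), Irrational x → ∀ p q : ℤ, (p : ℝ) + q * x = 0 → q = 0 := by
    intro x hx p q hpq
    by_contra hq
    have := (hx.intCast_mul hq).ne_int (-p)
    apply this
    push_cast
    linarith
  have hbc : 4 * (b * c) = 0 := by
    apply key _ i3 (2 * b ^ 2 + 6 * c ^ 2 - a ^ 2)
    push_cast
    have e : (a : ℝ) = - (b * √2 + c * (√2 * √3)) := by rw [← h6]; linarith
    rw [e]
    linear_combination (-(b : ℝ)^2 - 2 * b * c * √3 - c ^ 2 * (√3 * √3)) * h2 - 2 * (c : ℝ) ^ 2 * h3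
  have hbc' : b = 0 ∨ c = 0 := by
    rcases mul_eq_zero.1 hbc with h | h
    · omega
    · exact mul_eq_zero.1 h
  rcases hbc' with rfl | rfl
  · have hc : c = 0 := key _ i6 a c (by simpa using h)
    subst hc
    simpa using h
  · have hc : b = 0 := key _ i2 a b (by simpa using h)
    subst hc
    simpa using h

abbrev T3 := UnitAddTorus (Fin 3)

lemma mFourier_add_pt (n : Fin 3 → ℤ) (x y : T3) :
    mFourier n (x + y) = mFourier n x * mFourier n y := by
  simp only [mFourier, ContinuousMap.coe_mk, Pi.add_apply, fourier_apply, smul_add,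
    AddCircle.toCircle_add, Circle.coe_mul, Finset.prod_mul_distrib]

section
variable {G : Type*} [AddCommGroup G] [TopologicalSpace G] [IsTopologicalAddGroup G]
  [CompactSpace G] [MeasurableSpace G] [BorelSpace G]

lemma integral_char (μ : Measure G) [μ.IsAddHaarMeasure] (φ : G →+ T3) (n : Fin 3 → ℤ)
    (g : G) (hg : mFourier n (φ g) ≠ 1) : ∫ x, mFourier n (φ x) ∂μ = 0 := by
  have h := integral_add_right_eq_self (μ := μ) (fun x => mFourier n (φ x)) g
  simp only [map_add, mFourier_add_pt] at h
  rw [integral_mul_const] at h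
  by_contra h0
  exact hg (mul_left_cancel₀ h0 (by rw [h, mul_one]))

lemma exists_functional (μ : Measure G) [IsProbabilityMeasure μ] (φ : G → T3)
    (hφ : Continuous φ) :
    ∃ L : C(T3, ℂ) →L[ℂ] ℂ, ∀ f, L f = ∫ x, f (φ x) ∂μ := by
  have hint : ∀ f : C(T3, ℂ), Integrable (fun x => f (φ x)) μ := fun f =>
    (f.continuous.comp hφ).integrable_of_hasCompactSupport (HasCompactSupport.of_compactSpace _)
  refine ⟨LinearMap.mkContinuous
    { toFun := fun f => ∫ x, f (φ x) ∂μ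
      map_add' := fun f g => integral_add (hint f) (hint g)
      map_smul' := fun c f => integral_const_mul c _ } 1 ?_, fun f => rfl⟩
  intro f
  have := norm_integral_le_of_norm_le_const (μ := μ) (f := fun x => f (φ x)) (C := ‖f‖)
    (Filter.Eventually.of_forall fun x => f.norm_coe_le_norm _)
  simpa using this

lemma exists_haar : ∃ μ : Measure G, μ.IsAddHaarMeasure ∧ IsProbabilityMeasure μ := by
  refine ⟨Measure.addHaarMeasure ⊤, inferInstance, ⟨?_⟩⟩
  have := Measure.addHaarMeasure_self (G := G) (K₀ := ⊤)
  simpa using this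
end

/-- A closed subgroup on which every nontrivial character is nontrivial is everything. -/
lemma closed_subgroup_univ (K : AddSubgroup T3) (hK : IsClosed (K : Set T3))
    (h : ∀ n : Fin 3 → ℤ, n ≠ 0 → ∃ g ∈ K, mFourier n g ≠ 1) (x : T3) : x ∈ K := by
  have : CompactSpace K := isCompact_iff_compactSpace.1 hK.isCompact
  obtain ⟨μ, hμ, hμ'⟩ := exists_haar (G := T3)
  obtain ⟨ν, hν, hν'⟩ := exists_haar (G := K)
  obtain ⟨L, hL⟩ := exists_functional μ id continuous_id
  obtain ⟨M, hM⟩ := exists_functional ν (fun k : K => (k : T3)) continuous_subtype_val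
  have hLM : L = M := by
    apply ContinuousLinearMap.ext_on (s := Set.range (mFourier (d := Fin 3)))
    · rw [Submodule.dense_iff_topologicalClosure_eq_top]
      exact span_mFourier_closure_eq_top
    · rintro _ ⟨n, rfl⟩
      rw [hL, hM]
      by_cases hn : n = 0
      · subst hn
        simp [mFourier_zero]
      · obtain ⟨g, hgK, hg⟩ := h n hn
        exact (integral_char μ (AddMonoidHom.id T3) n g hg).trans
          (integral_char ν K.subtype n ⟨g, hgK⟩ hg).symm
  have hc : Continuous fun y : T3 => Metric.infDist y (K : Set T3) := Metric.continuous_infDist_pt _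
  have hf := congrArg (fun Λ : C(T3, ℂ) →L[ℂ] ℂ =>
    Λ ⟨fun y => ((Metric.infDist y (K : Set T3) : ℝ) : ℂ), Complex.continuous_ofReal.comp hc⟩) hLM
  simp only [hL, hM, ContinuousMap.coe_mk, id] at hf
  have hz : ∀ k : K, Metric.infDist (k : T3) (K : Set T3) = 0 := fun k =>
    Metric.infDist_zero_of_mem k.2
  simp only [hz, Complex.ofReal_zero, integral_zero] at hf
  rw [integral_complex_ofReal, Complex.ofReal_eq_zero, integral_eq_zero_iff_of_nonneg
    (fun y => Metric.infDist_nonneg)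
    (hc.integrable_of_hasCompactSupport (HasCompactSupport.of_compactSpace _))] at hf
  have h0 := (hc.ae_eq_iff_eq μ continuous_zero).1 hf
  exact (hK.mem_iff_infDist_zero ⟨0, K.zero_mem⟩).2 (congrFun h0 x)

/-- The line as a homomorphism. -/
noncomputable def lineHom : ℝ →+ T3 where
  toFun t := ![(t : AddCircle (1 : ℝ)), ((√2 * t : ℝ) : AddCircle (1 : ℝ)),
    ((√6 * t : ℝ) : AddCircle (1 : ℝ))]
  map_zero' := by
    ext i; fin_cases i <;> simp
  map_add' s t := by
    ext i; fin_cases i <;> simp [mul_add]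

lemma line_char (n : Fin 3 → ℤ) (hn : n ≠ 0) : ∃ t, mFourier n (lineHom t) ≠ 1 := by
  set θ : ℝ := n 0 + n 1 * √2 + n 2 * √6 with hθ
  have hθ0 : θ ≠ 0 := by
    intro h0
    obtain ⟨h1, h2, h3⟩ := indep_aux _ _ _ h0
    apply hn
    ext i; fin_cases i <;> simp [h1, h2, h3]
  refine ⟨1 / (2 * θ), ?_⟩
  have : mFourier n (lineHom (1 / (2 * θ))) = -1 := by
    simp only [mFourier, ContinuousMap.coe_mk, lineHom, AddMonoidHom.coe_mk, ZeroHom.coe_mk,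
      Fin.prod_univ_three, Matrix.cons_val]
    rw [fourier_coe_apply, fourier_coe_apply, fourier_coe_apply, ← Complex.exp_add,
      ← Complex.exp_add, ← Complex.exp_pi_mul_I]
    congr 1
    have e : (n 0 + n 1 * √2 + n 2 * √6 : ℝ) * (1 / (2 * θ)) = 1 / 2 := by
      rw [← hθ]; field_simp
    have e' := congrArg (fun r : ℝ => (r : ℂ)) e
    push_cast at e' ⊢
    linear_combination (2 * Real.pi * Complex.I) * e'
  rw [this]
  norm_num

/-- The line in direction `(1, √2, √6)` projects to a dense orbit on the
3-torus `(ℝ/ℤ)³`. -/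
theorem dense_line_orbit_on_three_torus :
    Dense (Set.range (fun t : ℝ =>
      ((↑t, ↑(Real.sqrt 2 * t), ↑(Real.sqrt 6 * t)) :
        AddCircle (1 : ℝ) × AddCircle (1 : ℝ) × AddCircle (1 : ℝ)))) := by
  have h1 : DenseRange lineHom := by
    intro x
    have := closed_subgroup_univ lineHom.range.topologicalClosure
      (AddSubgroup.isClosed_topologicalClosure _) (fun n hn => by
        obtain ⟨t, ht⟩ := line_char n hn
        exact ⟨lineHom t, AddSubgroup.le_topologicalClosure _ ⟨t, rfl⟩, ht⟩) x
    rw [← SetLike.mem_coe, AddSubgroup.topologicalClosure_coe, AddMonoidHom.coe_range] at this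
    exact this
  let p : T3 → AddCircle (1 : ℝ) × AddCircle (1 : ℝ) × AddCircle (1 : ℝ) :=
    fun x => (x 0, x 1, x 2)
  have hp : Continuous p := by fun_prop
  have hs : Function.Surjective p := fun ⟨a, b, c⟩ => ⟨![a, b, c], rfl⟩
  exact hs.denseRange.comp h1 hp
end

section
/- There exists a rotationally symmetric Beltrami field on the closed unit ball of Euclidean 3-space tangent to its boundary: there exist λ ≠ 0 and a smooth vector field X on Euclidean 3-space such that (curl X) x = λ • X x for all x with ‖x‖ ≤ 1; ⟪X x, x⟫ = 0 for all x with ‖x‖ = 1; [Y, X] x = 0 for all x with ‖x‖ ≤ 1, where Y is the rotation field Y (x₁,x₂,x₃) = (−x₂, x₁, 0); and X does not vanish identically on the closed unit ball. -/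
open scoped RealInnerProductSpace

noncomputable section

open scoped RealInnerProductSpace ContDiff

theorem bel_mk3_0 (a b c : ℝ) : mk3 a b c 0 = a := rfl
theorem bel_mk3_1 (a b c : ℝ) : mk3 a b c 1 = b := rfl
theorem bel_mk3_2 (a b c : ℝ) : mk3 a b c 2 = c := rfl

theorem bel_ext {x y : E3} (h0 : x 0 = y 0) (h1 : x 1 = y 1) (h2 : x 2 = y 2) : x = y := by
  ext i
  fin_cases i
  · exact h0
  · exact h1
  · exact h2

/-- An entire function `F` with `t F(-t²) = sin t`. -/
theorem bel_exists_F : ∃ F : ℝ → ℝ, ContDiff ℝ ω F ∧ ∀ t : ℝ, t * F (-t ^ 2) = Real.sin t := by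
  let c : ℕ → ℝ := fun n => ((2 * n + 1).factorial : ℝ)⁻¹
  have hc : ∀ n, c n ≠ 0 := fun n => by
    simp only [c]; positivity
  have hlim : Filter.Tendsto (fun n => ‖c n.succ‖ / ‖c n‖) Filter.atTop (nhds 0) := by
    have h1 : ∀ n : ℕ, ‖c n.succ‖ / ‖c n‖ ≤ 1 / ((n : ℝ) + 1) := by
      intro n
      have hf : ((2 * (n + 1) + 1).factorial : ℝ)
          = (2 * n + 3) * (2 * n + 2) * ((2 * n + 1).factorial : ℝ) := by
        have : 2 * (n + 1) + 1 = (2 * n + 1 + 1) + 1 := by ring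
        rw [this, Nat.factorial_succ, Nat.factorial_succ]
        push_cast
        ring
      have hp : (0 : ℝ) < ((2 * n + 1).factorial : ℝ) := by positivity
      simp only [c, norm_inv, Nat.succ_eq_add_one, RCLike.norm_natCast]
      rw [hf, div_le_div_iff₀ (by positivity) (by positivity)]
      field_simp
      nlinarith [(Nat.cast_nonneg n : (0 : ℝ) ≤ n)]
    exact squeeze_zero (fun n => by positivity) h1 tendsto_one_div_add_atTop_nhds_zero_nat
  have hrad : (FormalMultilinearSeries.ofScalars ℝ c).radius = ⊤ :=
    FormalMultilinearSeries.ofScalars_radius_eq_top_of_tendsto ℝ c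
      (Filter.Eventually.of_forall hc) hlim
  have hball := (FormalMultilinearSeries.ofScalars ℝ c).hasFPowerSeriesOnBall (by rw [hrad]; simp)
  refine ⟨(FormalMultilinearSeries.ofScalars ℝ c).sum, ?_, ?_⟩
  · rw [contDiff_iff_contDiffAt]
    intro x
    refine (hball.analyticAt_of_mem ?_).contDiffAt
    rw [hrad]; simp
  · intro t
    have h := hball.hasSum (y := -t ^ 2) (by rw [hrad]; simp)
    have h2 := h.mul_left t
    have h3 := Real.hasSum_sin t
    rw [zero_add] at h2
    refine h2.unique ?_
    have hfun : (fun n => t * (FormalMultilinearSeries.ofScalars ℝ c n) fun _ => -t ^ 2)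
        = fun n => (-1) ^ n * t ^ (2 * n + 1) / ((2 * n + 1).factorial : ℝ) := ?_
    · rw [hfun]; exact h3
    funext n
    rw [FormalMultilinearSeries.ofScalars_apply_eq]
    simp only [c, smul_eq_mul]
    field_simp
    rw [neg_pow]
    ring

/-- The profile function. -/
theorem bel_exists_g : ∃ (lam : ℝ) (g : ℝ → ℝ), lam ≠ 0 ∧ ContDiff ℝ ω g ∧
    (∀ s, 0 ≤ s → 4 * s * deriv (deriv g) s + 10 * deriv g s = -lam ^ 2 * g s) ∧ g 1 = 0 ∧ g 0 ≠ 0 := by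
  obtain ⟨F, hF, hs⟩ := bel_exists_F
  have hF1 : ContDiff ℝ ω (deriv F) := hF.deriv'
  have hF2 : ContDiff ℝ ω (deriv (deriv F)) := hF1.deriv'
  have hF3 : ContDiff ℝ ω (deriv (deriv (deriv F))) := hF2.deriv'
  have d0 : ∀ z, HasDerivAt F (deriv F z) z := fun z =>
    (hF.differentiable (by simp) z).hasDerivAt
  have d1 : ∀ z, HasDerivAt (deriv F) (deriv (deriv F) z) z := fun z =>
    (hF1.differentiable (by simp) z).hasDerivAt
  have d2 : ∀ z, HasDerivAt (deriv (deriv F)) (deriv (deriv (deriv F)) z) z := fun z =>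
    (hF2.differentiable (by simp) z).hasDerivAt
  have dq : ∀ t : ℝ, HasDerivAt (fun t : ℝ => -t ^ 2) (-(2 * t)) t := fun t => by
    exact ((hasDerivAt_pow 2 t).fun_neg).congr_deriv (by simp)
  have hcos : ∀ t : ℝ, F (-t ^ 2) - 2 * t ^ 2 * deriv F (-t ^ 2) = Real.cos t := by
    intro t
    have h1 := (hasDerivAt_id t).mul ((d0 (-t ^ 2)).comp t (dq t))
    have h2 : (id * (F ∘ fun t : ℝ => -t ^ 2)) = Real.sin := by
      funext t; simpa using hs t
    rw [h2] at h1
    have := h1.unique (Real.hasDerivAt_sin t)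
    simp at this
    linarith
  have hode0 : ∀ t : ℝ, t * F (-t ^ 2) =
      t * (6 * deriv F (-t ^ 2) - 4 * t ^ 2 * deriv (deriv F) (-t ^ 2)) := by
    intro t
    have h1 := ((d0 (-t ^ 2)).comp t (dq t)).sub
      (((hasDerivAt_pow 2 t).const_mul 2).mul ((d1 (-t ^ 2)).comp t (dq t)))
    have h3 := h1.congr_of_eventuallyEq (f₁ := Real.cos)
      (Filter.Eventually.of_forall fun t => by
        simpa using (hcos t).symm)
    have := h3.unique (Real.hasDerivAt_cos t)
    simp at this
    rw [← hs] at this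
    linarith
  have hode1 : (fun t : ℝ => F (-t ^ 2)) =
      fun t => 6 * deriv F (-t ^ 2) - 4 * t ^ 2 * deriv (deriv F) (-t ^ 2) := by
    have c0 := hF.continuous
    have c1 := hF1.continuous
    have c2 := hF2.continuous
    refine Continuous.ext_on (dense_compl_singleton (0 : ℝ)) (by fun_prop) (by fun_prop) ?_
    intro t ht
    exact mul_left_cancel₀ ht (hode0 t)
  -- ODE for the derivative, on z < 0, then up to 0
  have hode2 : ∀ t : ℝ, t * deriv F (-t ^ 2) =
      t * (10 * deriv (deriv F) (-t ^ 2) - 4 * t ^ 2 * deriv (deriv (deriv F)) (-t ^ 2)) := by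
    intro t
    have h1 := (((d1 (-t ^ 2)).comp t (dq t)).const_mul 6).sub
      (((hasDerivAt_pow 2 t).const_mul 4).mul ((d2 (-t ^ 2)).comp t (dq t)))
    have h3 := h1.congr_of_eventuallyEq (f₁ := fun t : ℝ => F (-t ^ 2))
      (Filter.Eventually.of_forall fun t => by
        simpa using congrFun hode1 t)
    have := h3.unique ((d0 (-t ^ 2)).comp t (dq t))
    simp at this
    linarith
  have hode3 : (fun t : ℝ => deriv F (-t ^ 2)) =
      fun t => 10 * deriv (deriv F) (-t ^ 2)
        - 4 * t ^ 2 * deriv (deriv (deriv F)) (-t ^ 2) := by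
    have c1 := hF1.continuous
    have c2 := hF2.continuous
    have c3 := hF3.continuous
    refine Continuous.ext_on (dense_compl_singleton (0 : ℝ)) (by fun_prop) (by fun_prop) ?_
    intro t ht
    exact mul_left_cancel₀ ht (hode2 t)
  -- zero of the derivative
  obtain ⟨lam, hl, hz⟩ : ∃ lam : ℝ, 0 < lam ∧ Real.sin lam - lam * Real.cos lam = 0 := by
    have hc : ContinuousOn (fun t : ℝ => Real.sin t - t * Real.cos t)
        (Set.Icc Real.pi (2 * Real.pi)) := by fun_prop
    have := intermediate_value_Icc' (by linarith [Real.pi_pos]) hc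
    obtain ⟨l, hl, hl0⟩ := this (show (0 : ℝ) ∈ _ by
      simp
      linarith [Real.pi_pos])
    exact ⟨l, lt_of_lt_of_le Real.pi_pos hl.1, hl0⟩
  have hz1 : deriv F (-lam ^ 2) = 0 := by
    rw [← hs, ← hcos] at hz
    have h3 : lam ^ 3 * deriv F (-lam ^ 2) = 0 := by linarith
    rcases mul_eq_zero.1 h3 with h | h
    · exact absurd h (by positivity)
    · exact h
  have hz0 : deriv F 0 ≠ 0 := by
    have a := congrFun hode1 0
    have b := hcos 0
    simp at a b
    intro h
    rw [h] at a
    linarith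
  have e0 : ∀ s, HasDerivAt (fun s : ℝ => -(lam ^ 2) * s) (-(lam ^ 2)) s := fun s => by
    simpa using (hasDerivAt_id s).const_mul (-(lam ^ 2))
  have g1 : deriv (fun s => deriv F (-(lam ^ 2) * s))
      = fun s => deriv (deriv F) (-(lam ^ 2) * s) * (-(lam ^ 2)) := by
    funext s
    exact ((d1 _).comp s (e0 s)).deriv
  have g2 : deriv (fun s => deriv (deriv F) (-(lam ^ 2) * s) * (-(lam ^ 2)))
      = fun s => deriv (deriv (deriv F)) (-(lam ^ 2) * s) * (-(lam ^ 2)) * (-(lam ^ 2)) := by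
    funext s
    exact (((d2 _).comp s (e0 s)).mul_const _).deriv
  refine ⟨lam, fun s => deriv F (-(lam ^ 2) * s), hl.ne', ?_, ?_, ?_, ?_⟩
  · exact hF1.comp (by fun_prop)
  · intro s hs0
    rw [g1, g2]
    have h := congrFun hode3 (lam * Real.sqrt s)
    have h2 : (lam * Real.sqrt s) ^ 2 = lam ^ 2 * s := by
      rw [mul_pow, Real.sq_sqrt hs0]
    simp only [h2] at h
    simp only [neg_mul]
    rw [h]
    ring
  · simpa using hz1
  · simpa using hz0

/-- The Beltrami field associated with a profile `g`. -/
def belX (lam : ℝ) (g : ℝ → ℝ) (x : E3) : E3 :=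
  mk3 (lam * (g (x 0 ^ 2 + x 1 ^ 2 + x 2 ^ 2) * x 1)
        + 2 * (x 0 * x 2 * deriv g (x 0 ^ 2 + x 1 ^ 2 + x 2 ^ 2)))
      (-(lam * (g (x 0 ^ 2 + x 1 ^ 2 + x 2 ^ 2) * x 0))
        + 2 * (x 1 * x 2 * deriv g (x 0 ^ 2 + x 1 ^ 2 + x 2 ^ 2)))
      (-(2 * g (x 0 ^ 2 + x 1 ^ 2 + x 2 ^ 2))
        - 2 * ((x 0 ^ 2 + x 1 ^ 2) * deriv g (x 0 ^ 2 + x 1 ^ 2 + x 2 ^ 2)))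

theorem belX_contDiff (lam : ℝ) (g : ℝ → ℝ) (hg : ContDiff ℝ ω g) : ContDiff ℝ ω (belX lam g) := by
  have hg1 : ContDiff ℝ ω (deriv g) := hg.deriv'
  rw [contDiff_euclidean]
  intro i
  have hq : ContDiff ℝ ω (fun x : E3 => x 0 ^ 2 + x 1 ^ 2 + x 2 ^ 2) := by fun_prop
  have h0 := hg.comp hq
  have h1 := hg1.comp hq
  simp only [Function.comp_def] at h0 h1
  fin_cases i
  · simp only [belX, Fin.zero_eta, bel_mk3_0]
    fun_prop
  · simp only [belX, Fin.mk_one, bel_mk3_1]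
    fun_prop
  · simp only [belX, Fin.reduceFinMk, bel_mk3_2]
    fun_prop

theorem bel_fderiv_apply {X : E3 → E3} (hX : Differentiable ℝ X) (x v : E3) (i : Fin 3) {d : ℝ}
    (h : HasDerivAt (fun t : ℝ => X (x + t • v) i) d 0) : fderiv ℝ X x v i = d := by
  have h1 : HasDerivAt (fun t : ℝ => x + t • v) v 0 := by
    simpa using ((hasDerivAt_id (0 : ℝ)).smul_const v).const_add x
  have h2 : HasFDerivAt X (fderiv ℝ X x) (x + (0 : ℝ) • v) := by
    simpa using (hX x).hasFDerivAt
  have h3 := h2.comp_hasDerivAt (0 : ℝ) h1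
  have h4 := (EuclideanSpace.proj i : E3 →L[ℝ] ℝ).hasFDerivAt.comp_hasDerivAt
    (0 : ℝ) h3
  exact h4.unique h

theorem bel_lines (g : ℝ → ℝ) (hg : ContDiff ℝ ω g) (x v : E3) :
    HasDerivAt (fun t : ℝ => g ((x + t • v) 0 ^ 2 + (x + t • v) 1 ^ 2 + (x + t • v) 2 ^ 2))
      (deriv g (x 0 ^ 2 + x 1 ^ 2 + x 2 ^ 2) * (2 * (x 0 * v 0 + x 1 * v 1 + x 2 * v 2))) 0 := by
  have hc : ∀ i, HasDerivAt (fun t : ℝ => (x + t • v) i) (v i) 0 := fun i => by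
    simpa using ((hasDerivAt_id (0 : ℝ)).mul_const (v i)).const_add (x i)
  have hq := (((hc 0).fun_pow 2).fun_add ((hc 1).fun_pow 2)).fun_add ((hc 2).fun_pow 2)
  have hd := (hg.differentiable (by simp) ((x + (0 : ℝ) • v) 0 ^ 2 + (x + (0 : ℝ) • v) 1 ^ 2
    + (x + (0 : ℝ) • v) 2 ^ 2)).hasDerivAt
  refine (hd.comp (0 : ℝ) hq).congr_deriv ?_
  simp
  ring_nf
  simp

theorem belX_fderiv (lam : ℝ) (g : ℝ → ℝ) (hg : ContDiff ℝ ω g) (x v : E3) (s σ : ℝ) (hs : s = x 0 ^ 2 + x 1 ^ 2 + x 2 ^ 2)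
    (hσ : σ = 2 * (x 0 * v 0 + x 1 * v 1 + x 2 * v 2)) :
    fderiv ℝ (belX lam g) x v =
      mk3 (lam * (deriv g s * σ * x 1 + g s * v 1)
            + 2 * ((v 0 * x 2 + x 0 * v 2) * deriv g s + x 0 * x 2 * (deriv (deriv g) s * σ)))
          (-(lam * (deriv g s * σ * x 0 + g s * v 0))
            + 2 * ((v 1 * x 2 + x 1 * v 2) * deriv g s + x 1 * x 2 * (deriv (deriv g) s * σ)))
          (-(2 * (deriv g s * σ))
            - 2 * ((2 * x 0 * v 0 + 2 * x 1 * v 1) * deriv g s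
              + (x 0 ^ 2 + x 1 ^ 2) * (deriv (deriv g) s * σ))) := by
  have hX : Differentiable ℝ (belX lam g) := (belX_contDiff lam g hg).differentiable (by simp)
  have hc : ∀ i, HasDerivAt (fun t : ℝ => (x + t • v) i) (v i) 0 := fun i => by
    simpa using ((hasDerivAt_id (0 : ℝ)).mul_const (v i)).const_add (x i)
  have l0 := bel_lines g hg x v
  have l1 := bel_lines (deriv g) hg.deriv' x v
  rw [← hs, ← hσ] at l0 l1
  apply bel_ext
  · apply bel_fderiv_apply hX
    refine (((l0.fun_mul (hc 1)).const_mul lam).fun_add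
      ((((hc 0).fun_mul (hc 2)).fun_mul l1).const_mul 2)).congr_deriv ?_
    simp [bel_mk3_0, hs]
  · apply bel_fderiv_apply hX
    refine (((l0.fun_mul (hc 0)).const_mul lam).fun_neg.fun_add
      ((((hc 1).fun_mul (hc 2)).fun_mul l1).const_mul 2)).congr_deriv ?_
    simp [bel_mk3_1, hs]
  · apply bel_fderiv_apply hX
    refine ((l0.const_mul 2).fun_neg.fun_sub
      (((((hc 0).fun_pow 2).fun_add ((hc 1).fun_pow 2)).fun_mul l1).const_mul 2)).congr_deriv ?_
    simp [bel_mk3_2, hs]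

theorem bel_fderiv_Yrot (x v : E3) : fderiv ℝ Yrot x v = mk3 (-(v 1)) (v 0) 0 := by
  have hX : Differentiable ℝ Yrot := by
    rw [differentiable_euclidean]
    intro i
    fin_cases i
    · simp only [Yrot, Fin.zero_eta, bel_mk3_0]
      fun_prop
    · simp only [Yrot, Fin.mk_one, bel_mk3_1]
      fun_prop
    · simp only [Yrot, Fin.reduceFinMk, bel_mk3_2]
      fun_prop
  have hc : ∀ i, HasDerivAt (fun t : ℝ => (x + t • v) i) (v i) 0 := fun i => by
    simpa using ((hasDerivAt_id (0 : ℝ)).mul_const (v i)).const_add (x i)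
  apply bel_ext
  · exact bel_fderiv_apply hX _ _ _ (hc 1).fun_neg
  · exact bel_fderiv_apply hX _ _ _ (hc 0)
  · exact bel_fderiv_apply hX _ _ _ (hasDerivAt_const _ _)


/-- There exists a rotationally symmetric Beltrami field on the closed unit
ball of Euclidean 3-space, tangent to its boundary: some `λ ≠ 0` and a smooth vector field
`X` with `curl X = λ • X` on the ball, `⟪X x, x⟫ = 0` on the boundary sphere,
`[Y, X] ≡ 0` on the ball for the rotation field `Y`, and `X` not identically zero on the
ball. -/
theorem exists_rotationally_symmetric_beltrami_on_ball :
    ∃ (lam : ℝ) (X : E3 → E3), lam ≠ 0 ∧ ContDiff ℝ (⊤ : ℕ∞) X ∧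
      (∀ x : E3, ‖x‖ ≤ 1 → curl3 X x = lam • X x) ∧
      (∀ x : E3, ‖x‖ = 1 → ⟪X x, x⟫ = 0) ∧
      (∀ x : E3, ‖x‖ ≤ 1 → fderiv ℝ X x (Yrot x) - fderiv ℝ Yrot x (X x) = 0) ∧
      (∃ x : E3, ‖x‖ ≤ 1 ∧ X x ≠ 0) := by
  obtain ⟨lam, g, hl, hg, hode, hg1, hg0⟩ := bel_exists_g
  have hnorm : ∀ x : E3, ‖x‖ ^ 2 = x 0 ^ 2 + x 1 ^ 2 + x 2 ^ 2 := fun x => by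
    rw [EuclideanSpace.norm_sq_eq, Fin.sum_univ_three]
    simp
  refine ⟨lam, belX lam g, hl, (belX_contDiff lam g hg).of_le (by exact_mod_cast le_top), ?_, ?_, ?_, 0, by simp, ?_⟩
  · intro x _
    have ho := hode (x 0 ^ 2 + x 1 ^ 2 + x 2 ^ 2) (by positivity)
    have hD := fun v => belX_fderiv lam g hg x v _ _ rfl rfl
    apply bel_ext
    · simp only [curl3, hD, bel_mk3_0, bel_mk3_1, bel_mk3_2, PiLp.smul_apply, smul_eq_mul, belX]
      simp [e3]
      linear_combination (-x 1) * ho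
    · simp only [curl3, hD, bel_mk3_0, bel_mk3_1, bel_mk3_2, PiLp.smul_apply, smul_eq_mul, belX]
      simp [e3]
      linear_combination (x 0) * ho
    · simp only [curl3, hD, bel_mk3_0, bel_mk3_1, bel_mk3_2, PiLp.smul_apply, smul_eq_mul, belX]
      simp [e3]
      ring
  · intro x hx
    have h := hnorm x
    rw [hx, one_pow] at h
    simp only [PiLp.inner_apply, Fin.sum_univ_three, belX, bel_mk3_0, bel_mk3_1, bel_mk3_2, ← h, hg1]
    simp
    ring
  · intro x _
    rw [bel_fderiv_Yrot, belX_fderiv lam g hg x (Yrot x) _ 0 rfl (by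
      simp only [Yrot, bel_mk3_0, bel_mk3_1, bel_mk3_2]; ring)]
    apply bel_ext
    · simp only [PiLp.sub_apply, PiLp.zero_apply, bel_mk3_0, bel_mk3_1, bel_mk3_2, belX, Yrot]
      ring
    · simp only [PiLp.sub_apply, PiLp.zero_apply, bel_mk3_0, bel_mk3_1, bel_mk3_2, belX, Yrot]
      ring
    · simp only [PiLp.sub_apply, PiLp.zero_apply, bel_mk3_0, bel_mk3_1, bel_mk3_2, belX, Yrot]
      ring
  · intro h
    have h2 := congrArg (fun y : E3 => y 2) h
    simp [belX, bel_mk3_2] at h2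
    exact hg0 h2
end
end
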